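/- Let G = (V,E) be a finite directed graph, let (c(e))_{e∈E} be nonnegative capacities, let x_0 ∈ V, and let (p_x)_{x∈V} be nonnegative reals. There exists a nonnegative function θ : E → ℝ_+ with div(θ) = Σ_{x∈V} p_x (δ_{x_0} − δ_x) and θ(e) ≤ c(e) for all e ∈ E, if and only if for every subset K ⊆ V containing x_0 one has c(∂_+K) ≥ Σ_{x ∈ K^c} p_x, where ∂_+K = {e ∈ E : tail(e) ∈ K, head(e) ∈ K^c} and c(∂_+K) = Σ_{e ∈ ∂_+K} c(e). Moreover, the same equivalence holds if the cut-set condition is only required for those K such that every y ∈ K can be reached from x_0 by a directed path contained in K. -/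

import Mathlib

open Finset

/-- The divergence of `θ` on the directed graph with edge set `E`. -/
noncomputable def divergence {V : Type*} [DecidableEq V] (E : Finset (V × V)) (θ : V × V → ℝ)
    (x : V) : ℝ :=
  (∑ e ∈ E.filter fun e => e.1 = x, θ e) - ∑ e ∈ E.filter fun e => e.2 = x, θ e

section Divergence

variable {V : Type*} [DecidableEq V] (E : Finset (V × V))

theorem sum_divergence (θ : V × V → ℝ) (K : Finset V) :
    ∑ x ∈ K, divergence E θ x =
      (∑ e ∈ E.filter fun e => e.1 ∈ K ∧ e.2 ∉ K, θ e) -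
        ∑ e ∈ E.filter fun e => e.1 ∉ K ∧ e.2 ∈ K, θ e := by
  simp only [divergence, sum_sub_distrib, sum_filter]
  rw [sum_comm, sum_comm (s := K) (t := E)]
  simp only [sum_ite_eq]
  rw [← sum_sub_distrib, ← sum_sub_distrib]
  refine sum_congr rfl fun e _ => ?_
  by_cases h₁ : e.1 ∈ K <;> by_cases h₂ : e.2 ∈ K <;> simp [h₁, h₂]

theorem sum_univ_divergence [Fintype V] (θ : V × V → ℝ) :
    ∑ x, divergence E θ x = 0 := by
  rw [sum_divergence]
  simp

theorem divergence_add_single (θ : V × V → ℝ) {e : V × V} (he : e ∈ E) (ε : ℝ) (x : V) :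
    divergence E (θ + Pi.single e ε) x =
      divergence E θ x + ((if e.1 = x then ε else 0) - if e.2 = x then ε else 0) := by
  simp only [divergence, Pi.add_apply, sum_add_distrib, sum_pi_single', mem_filter, he,
    true_and]
  ring

theorem continuous_divergence (x : V) : Continuous fun θ => divergence E θ x := by
  unfold divergence
  fun_prop

/-- The squared distance from the divergence of `θ` to `b`. -/
noncomputable def divergenceDefect [Fintype V] (b : V → ℝ) (θ : V × V → ℝ) : ℝ :=
  ∑ x, (b x - divergence E θ x) ^ 2

theorem divergenceDefect_add_single [Fintype V] (b : V → ℝ) (θ : V × V → ℝ) {e : V × V}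
    (he : e ∈ E) (hne : e.1 ≠ e.2) (ε : ℝ) :
    divergenceDefect E b (θ + Pi.single e ε) = divergenceDefect E b θ +
      2 * (ε ^ 2 - ε * ((b e.1 - divergence E θ e.1) - (b e.2 - divergence E θ e.2))) := by
  have key : ∀ x, (b x - divergence E (θ + Pi.single e ε) x) ^ 2 =
      (b x - divergence E θ x) ^ 2 +
        ((if e.1 = x then ε ^ 2 - 2 * ε * (b x - divergence E θ x) else 0) +
          if e.2 = x then ε ^ 2 + 2 * ε * (b x - divergence E θ x) else 0) := by
    intro x
    rw [divergence_add_single E θ he]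
    by_cases h₁ : e.1 = x
    · have h₂ : e.2 ≠ x := fun h => hne (h₁.trans h.symm)
      simp only [h₁, h₂, if_true, if_false]
      ring
    · by_cases h₂ : e.2 = x
      · simp only [h₁, h₂, if_true, if_false]
        ring
      · simp [h₁, h₂]
  simp only [divergenceDefect, key, sum_add_distrib, sum_ite_eq, mem_univ, if_true]
  ring

/-- A flow within capacities whose divergence is closest to `b`: it saturates the edges along
which the residual `b - div θ` decreases and vanishes on those along which it increases. -/
theorem exists_flow_complementary_slackness [Fintype V] (hE : ∀ e ∈ E, e.1 ≠ e.2)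
    (c : V × V → ℝ) (hc : ∀ e ∈ E, 0 ≤ c e) (b : V → ℝ) :
    ∃ θ : V × V → ℝ, (∀ e, 0 ≤ θ e) ∧ (∀ e ∈ E, θ e ≤ c e) ∧
      (∀ e ∈ E, b e.2 - divergence E θ e.2 < b e.1 - divergence E θ e.1 → θ e = c e) ∧
      (∀ e ∈ E, b e.1 - divergence E θ e.1 < b e.2 - divergence E θ e.2 → θ e = 0) := by
  have hcompact : IsCompact (Set.univ.pi fun e => Set.Icc 0 |c e|) :=
    isCompact_univ_pi fun _ => isCompact_Icc
  have hcont : Continuous (divergenceDefect E b) :=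
    continuous_finsetSum _ fun x _ =>
      (continuous_const.sub (continuous_divergence E x)).pow 2
  obtain ⟨θ, hθ, hmin⟩ := hcompact.exists_isMinOn
    ⟨0, fun e _ => ⟨le_rfl, abs_nonneg _⟩⟩ hcont.continuousOn
  have h0 : ∀ e, 0 ≤ θ e := fun e => (hθ e trivial).1
  have hle : ∀ e ∈ E, θ e ≤ c e := fun e he =>
    (hθ e trivial).2.trans_eq (abs_of_nonneg (hc e he))
  have hopt : ∀ e ∈ E, ∀ ε, 0 ≤ θ e + ε → θ e + ε ≤ c e →
      ε * ((b e.1 - divergence E θ e.1) - (b e.2 - divergence E θ e.2)) ≤ ε ^ 2 := by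
    intro e he ε h₁ h₂
    have hmem : θ + Pi.single e ε ∈ Set.univ.pi fun e => Set.Icc 0 |c e| := by
      intro f _
      by_cases hf : f = e
      · subst hf
        simpa using And.intro h₁ (h₂.trans (le_abs_self _))
      · simpa [hf] using hθ f trivial
    have := isMinOn_iff.mp hmin _ hmem
    rw [divergenceDefect_add_single E b θ he (hE e he)] at this
    linarith
  refine ⟨θ, h0, hle, fun e he hr => ?_, fun e he hr => ?_⟩
  · by_contra hne
    have hlt := lt_of_le_of_ne (hle e he) hne
    set d := (b e.1 - divergence E θ e.1) - (b e.2 - divergence E θ e.2)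
    have hdpos : 0 < d := sub_pos.mpr hr
    have hε : 0 < min (c e - θ e) (d / 2) := lt_min (sub_pos.mpr hlt) (half_pos hdpos)
    have hε₁ := min_le_left (c e - θ e) (d / 2)
    have hε₂ := min_le_right (c e - θ e) (d / 2)
    have := hopt e he _ (add_nonneg (h0 e) hε.le) (by linarith)
    nlinarith
  · by_contra hne
    have hlt := lt_of_le_of_ne (h0 e) (Ne.symm hne)
    set d := (b e.1 - divergence E θ e.1) - (b e.2 - divergence E θ e.2)
    have hdneg : d < 0 := sub_neg.mpr hr
    have hε : 0 < min (θ e) (-d / 2) := lt_min hlt (by linarith)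
    have hε₁ := min_le_left (θ e) (-d / 2)
    have hε₂ := min_le_right (θ e) (-d / 2)
    have := hopt e he (-min (θ e) (-d / 2)) (by linarith) (by linarith [hle e he])
    nlinarith

end Divergence

section Cuts

variable {V : Type*} [Fintype V] [DecidableEq V] (E : Finset (V × V)) (c : V × V → ℝ)

theorem sum_source_sub_demand (x₀ : V) (p : V → ℝ) (K : Finset V) :
    ∑ x ∈ K, ((if x = x₀ then ∑ z, p z else 0) - p x) =
      if x₀ ∈ K then ∑ x ∈ Kᶜ, p x else -∑ x ∈ K, p x := by
  rw [sum_sub_distrib, sum_ite_eq' K x₀, ← sum_add_sum_compl K p]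
  split_ifs <;> ring

/-- If a flow meets the demands `p`, the demand outside `K` is at most the capacity of the cut. -/
theorem sum_le_cut_of_flow {θ : V × V → ℝ} (h0 : ∀ e, 0 ≤ θ e) (hle : ∀ e ∈ E, θ e ≤ c e)
    {x₀ : V} {p : V → ℝ}
    (hdiv : ∀ x, divergence E θ x = (if x = x₀ then ∑ z, p z else 0) - p x)
    {K : Finset V} (hK : x₀ ∈ K) :
    ∑ x ∈ Kᶜ, p x ≤ ∑ e ∈ E.filter fun e => e.1 ∈ K ∧ e.2 ∉ K, c e := by
  have hsum := sum_source_sub_demand x₀ p K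
  rw [if_pos hK] at hsum
  simp only [← hdiv] at hsum
  rw [sum_divergence] at hsum
  have hin : 0 ≤ ∑ e ∈ E.filter fun e => e.1 ∉ K ∧ e.2 ∈ K, θ e := sum_nonneg fun e _ => h0 e
  have hout : ∑ e ∈ E.filter (fun e => e.1 ∈ K ∧ e.2 ∉ K), θ e ≤
      ∑ e ∈ E.filter (fun e => e.1 ∈ K ∧ e.2 ∉ K), c e :=
    sum_le_sum fun e he => hle e (mem_filter.mp he).1
  linarith

theorem exists_flow_of_sum_le_cut (hE : ∀ e ∈ E, e.1 ≠ e.2) (hc : ∀ e ∈ E, 0 ≤ c e)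
    {x₀ : V} {p : V → ℝ} (hp : ∀ x, 0 ≤ p x)
    (hcut : ∀ K : Finset V, x₀ ∈ K →
      ∑ x ∈ Kᶜ, p x ≤ ∑ e ∈ E.filter fun e => e.1 ∈ K ∧ e.2 ∉ K, c e) :
    ∃ θ : V × V → ℝ, (∀ e, 0 ≤ θ e) ∧ (∀ e ∈ E, θ e ≤ c e) ∧
      ∀ x, divergence E θ x = (if x = x₀ then ∑ z, p z else 0) - p x := by
  set b : V → ℝ := fun x => (if x = x₀ then ∑ z, p z else 0) - p x with hb
  obtain ⟨θ, h0, hle, hsat, hvan⟩ := exists_flow_complementary_slackness E hE c hc b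
  refine ⟨θ, h0, hle, ?_⟩
  set r : V → ℝ := fun x => b x - divergence E θ x with hr
  let K : Finset V := univ.filter fun x => 0 < r x
  have hmem : ∀ x, x ∈ K ↔ 0 < r x := fun x => by simp [K]
  have hout : ∑ e ∈ E.filter (fun e => e.1 ∈ K ∧ e.2 ∉ K), θ e =
      ∑ e ∈ E.filter (fun e => e.1 ∈ K ∧ e.2 ∉ K), c e := by
    refine sum_congr rfl fun e he => ?_
    simp only [mem_filter, hmem, not_lt] at he
    exact hsat e he.1 (he.2.2.trans_lt he.2.1)
  have hin : ∑ e ∈ E.filter (fun e => e.1 ∉ K ∧ e.2 ∈ K), θ e = 0 := by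
    refine sum_eq_zero fun e he => ?_
    simp only [mem_filter, hmem, not_lt] at he
    exact hvan e he.1 (he.2.1.trans_lt he.2.2)
  have hrK : ∑ x ∈ K, r x ≤ 0 := by
    simp only [hr, sum_sub_distrib]
    rw [sum_divergence, hout, hin, hb, sum_source_sub_demand]
    split_ifs with hK
    · linarith [hcut K hK]
    · have hpK : 0 ≤ ∑ x ∈ K, p x := sum_nonneg fun x _ => hp x
      have hcK : 0 ≤ ∑ e ∈ E.filter (fun e => e.1 ∈ K ∧ e.2 ∉ K), c e :=
        sum_nonneg fun e he => hc e (mem_filter.mp he).1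
      linarith
  have hnonpos : ∀ x, r x ≤ 0 := by
    intro x
    by_contra! hx
    exact hrK.not_gt (sum_pos (fun y hy => (hmem y).mp hy) ⟨x, (hmem x).mpr hx⟩)
  have htotal : ∑ x, r x = 0 := by
    simp only [hr, sum_sub_distrib, sum_univ_divergence]
    rw [hb, sum_source_sub_demand]
    simp
  have hzero := (sum_eq_zero_iff_of_nonpos fun x _ => hnonpos x).mp htotal
  intro x
  exact (sub_eq_zero.mp (hzero x (mem_univ x))).symm

/-- The cut condition for sets reachable from `x₀` within themselves implies it for all sets. -/
theorem sum_le_cut_of_reachable (hc : ∀ e ∈ E, 0 ≤ c e) {x₀ : V} {p : V → ℝ}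
    (hp : ∀ x, 0 ≤ p x)
    (hcut : ∀ K : Finset V, x₀ ∈ K →
      (∀ y ∈ K, Relation.ReflTransGen (fun u v => (u, v) ∈ E ∧ v ∈ K) x₀ y) →
      ∑ x ∈ Kᶜ, p x ≤ ∑ e ∈ E.filter fun e => e.1 ∈ K ∧ e.2 ∉ K, c e)
    {K : Finset V} (hK : x₀ ∈ K) :
    ∑ x ∈ Kᶜ, p x ≤ ∑ e ∈ E.filter fun e => e.1 ∈ K ∧ e.2 ∉ K, c e := by
  classical
  let R : Finset V :=
    univ.filter fun y => Relation.ReflTransGen (fun u v => (u, v) ∈ E ∧ v ∈ K) x₀ y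
  have hmem : ∀ y, y ∈ R ↔ Relation.ReflTransGen (fun u v => (u, v) ∈ E ∧ v ∈ K) x₀ y :=
    fun y => by simp [R]
  have hRK : R ⊆ K := by
    intro y hy
    rcases Relation.ReflTransGen.cases_tail ((hmem y).mp hy) with rfl | ⟨_, _, h⟩
    exacts [hK, h.2]
  have hreach : ∀ y ∈ R, Relation.ReflTransGen (fun u v => (u, v) ∈ E ∧ v ∈ R) x₀ y := by
    intro y hy
    induction (hmem y).mp hy with
    | refl => exact .refl
    | tail hu huv ih =>
      exact (ih ((hmem _).mpr hu)).tail ⟨huv.1, (hmem _).mpr (hu.tail huv)⟩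
  calc ∑ x ∈ Kᶜ, p x ≤ ∑ x ∈ Rᶜ, p x :=
        sum_le_sum_of_subset_of_nonneg (compl_subset_compl.mpr hRK) fun x _ _ => hp x
    _ ≤ ∑ e ∈ E.filter fun e => e.1 ∈ R ∧ e.2 ∉ R, c e :=
        hcut R ((hmem x₀).mpr .refl) hreach
    _ ≤ ∑ e ∈ E.filter fun e => e.1 ∈ K ∧ e.2 ∉ K, c e := by
        refine sum_le_sum_of_subset_of_nonneg (fun e he => ?_)
          fun e he _ => hc e (mem_filter.mp he).1
        simp only [mem_filter] at he ⊢
        exact ⟨he.1, hRK he.2.1, fun h =>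
          he.2.2 ((hmem _).mpr (((hmem _).mp he.2.1).tail ⟨he.1, h⟩))⟩

end Cuts

/-- **generalized max-flow min-cut.** On a finite directed graph with
capacities `c`, a source `x₀` and nonnegative demands `(p_x)`, there exists a nonnegative
flow `θ ≤ c` with `div θ = ∑_x p_x (δ_{x₀} - δ_x)` if and only if every cut
`∂_+K` with `x₀ ∈ K` satisfies `c(∂_+K) ≥ ∑_{x ∈ Kᶜ} p_x`; moreover it suffices to
require the cut condition for the sets `K` all of whose points are reachable from `x₀`
by a directed path in `K`. -/
theorem maxflow_mincut
    {V : Type*} [Fintype V] [DecidableEq V]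
    (E : Finset (V × V)) (hE : ∀ e ∈ E, e.1 ≠ e.2)
    (c : V × V → ℝ) (hc : ∀ e ∈ E, 0 ≤ c e)
    (x₀ : V) (p : V → ℝ) (hp : ∀ x, 0 ≤ p x) :
    ((∃ θ : V × V → ℝ, (∀ e, 0 ≤ θ e) ∧ (∀ e ∈ E, θ e ≤ c e) ∧
        ∀ x : V, ((∑ e ∈ E.filter fun e => e.1 = x, θ e) -
            ∑ e ∈ E.filter fun e => e.2 = x, θ e) =
          (if x = x₀ then ∑ z, p z else 0) - p x) ↔
      (∀ K : Finset V, x₀ ∈ K →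
        ∑ x ∈ Kᶜ, p x ≤ ∑ e ∈ E.filter fun e => e.1 ∈ K ∧ e.2 ∉ K, c e)) ∧
    ((∃ θ : V × V → ℝ, (∀ e, 0 ≤ θ e) ∧ (∀ e ∈ E, θ e ≤ c e) ∧
        ∀ x : V, ((∑ e ∈ E.filter fun e => e.1 = x, θ e) -
            ∑ e ∈ E.filter fun e => e.2 = x, θ e) =
          (if x = x₀ then ∑ z, p z else 0) - p x) ↔
      (∀ K : Finset V, x₀ ∈ K →
        (∀ y ∈ K, Relation.ReflTransGen (fun u v => (u, v) ∈ E ∧ v ∈ K) x₀ y) →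
        ∑ x ∈ Kᶜ, p x ≤ ∑ e ∈ E.filter fun e => e.1 ∈ K ∧ e.2 ∉ K, c e)) := by
  refine ⟨⟨?_, exists_flow_of_sum_le_cut E c hE hc hp⟩, ?_, fun hcut => ?_⟩
  · rintro ⟨θ, h0, hle, hdiv⟩ K hK
    exact sum_le_cut_of_flow E c h0 hle hdiv hK
  · rintro ⟨θ, h0, hle, hdiv⟩ K hK _
    exact sum_le_cut_of_flow E c h0 hle hdiv hK
  · exact exists_flow_of_sum_le_cut E c hE hc hp fun K hK =>
      sum_le_cut_of_reachable E c hc hp hcut hK
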